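/- On the lexicographic domain ℒ, every rule satisfying drop strategy-proofness (DSP) and the worst-endowment lower bound (WELB) also satisfies subset-drop strategy-proofness (SDSP). -/

import Mathlib

attribute [local instance] Classical.propDecidable

namespace Realloc

/-- A strict preference over bundles: a strict total order on `Finset O`. -/
structure Pref (O : Type) : Type where
  strict : Finset O → Finset O → Prop
  total : ∀ X Y : Finset O, strict X Y ∨ X = Y ∨ strict Y X
  irrefl : ∀ X : Finset O, ¬ strict X X
  trans : ∀ X Y Z : Finset O, strict X Y → strict Y Z → strict X Z

/-- The weak ("at least as good as") relation associated with a strict preference. -/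
def Pref.weak {O : Type} (p : Pref O) (X Y : Finset O) : Prop :=
  p.strict X Y ∨ X = Y

/-- An allocation: nonempty pairwise disjoint bundles whose union is all of `O`. -/
structure Allocation (N O : Type) : Type where
  bundle : N → Finset O
  nonempty : ∀ i : N, (bundle i).Nonempty
  disj : ∀ i j : N, i ≠ j → ∀ o : O, o ∈ bundle i → o ∉ bundle j
  cover : ∀ o : O, ∃ i : N, o ∈ bundle i

variable {N O : Type}

/-- Two preferences induce the same marginal (singleton) ranking over objects. -/
def MargEq (p q : Pref O) : Prop :=
  ∀ x y : O, p.strict {x} {y} ↔ q.strict {x} {y}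

/-- Responsive preferences. -/
def Responsive [DecidableEq O] (p : Pref O) : Prop :=
  ∀ (X : Finset O) (y z : O), y ∉ X → z ∉ X →
    (p.strict (insert y X) (insert z X) ↔ p.strict {y} {z})

/-- Lexicographic preferences: `X` is preferred to `Y` iff the best object of the
symmetric difference belongs to `X`. -/
def Lexicographic [DecidableEq O] (p : Pref O) : Prop :=
  ∀ X Y : Finset O, X ≠ Y →
    (p.strict X Y ↔
      ∃ x ∈ X \ Y, ∀ y ∈ (X \ Y) ∪ (Y \ X), y ≠ x → p.strict {x} {y})

/-- Conditionally lexicographic preferences. -/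
def CondLex [DecidableEq O] (p : Pref O) : Prop :=
  ∀ X Y : Finset O, Disjoint X Y → X.Nonempty →
    ∃! x : O, x ∈ X ∧ ∀ Z : Finset O, Z ⊆ X.erase x → p.strict (insert x Y) (Y ∪ Z)

/-- Monotonic preferences. -/
def Monot (p : Pref O) : Prop :=
  ∀ X Y : Finset O, Y ⊆ X → p.weak X Y

/-- `p'` is a subset-drop strategy for `p` (relative to endowment `ωi`):
some set `X ⊆ O ∖ ωi` is moved to the bottom of the marginal ranking, preserving
the relative marginal order within `X` and within its complement. -/
def SubsetDropStrategy (ωi : Finset O) (p p' : Pref O) : Prop :=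
  ∃ X : Set O, (∀ x ∈ X, x ∉ ωi) ∧
    (∀ x ∈ X, ∀ y ∈ X, (p.strict {x} {y} ↔ p'.strict {x} {y})) ∧
    (∀ x ∉ X, ∀ y ∉ X, (p.strict {x} {y} ↔ p'.strict {x} {y})) ∧
    (∀ x ∈ X, ∀ y ∉ X, p'.strict {y} {x})

/-- `p'` is a drop strategy for `p`: a single object `x ∉ ωi` is moved to the bottom. -/
def DropStrategy (ωi : Finset O) (p p' : Pref O) : Prop :=
  ∃ x : O, x ∉ ωi ∧
    (∀ u v : O, u ≠ x → v ≠ x → (p.strict {u} {v} ↔ p'.strict {u} {v})) ∧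
    (∀ y : O, y ≠ x → p'.strict {y} {x})

/-- `p'` is a truncation strategy for `p`: the tail set
`{o ∈ O ∖ ωi : {x} R {o}}` (for some object `x`) is moved to the bottom. -/
def TruncationStrategy (ωi : Finset O) (p p' : Pref O) : Prop :=
  ∃ x : O,
    (∀ u v : O, (u ∉ ωi ∧ p.weak {x} {u}) → (v ∉ ωi ∧ p.weak {x} {v}) →
      (p.strict {u} {v} ↔ p'.strict {u} {v})) ∧
    (∀ u v : O, ¬(u ∉ ωi ∧ p.weak {x} {u}) → ¬(v ∉ ωi ∧ p.weak {x} {v}) →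
      (p.strict {u} {v} ↔ p'.strict {u} {v})) ∧
    (∀ u v : O, (u ∉ ωi ∧ p.weak {x} {u}) → ¬(v ∉ ωi ∧ p.weak {x} {v}) →
      p'.strict {v} {u})

/-- There is a Pareto-improving trading cycle at the assignment `μ`:
a cyclic sequence of `k+1 ≥ 1` distinct objects and distinct agents, each object owned
(at `μ`) by its agent, such that every agent on the cycle strictly gains by swapping
the object she relinquishes for the object she points to. -/
def ParetoImprovingCycleAt [DecidableEq O] (pref : N → Pref O) (μ : N → Finset O) : Prop :=
  ∃ (k : ℕ) (obj : Fin (k + 1) → O) (ag : Fin (k + 1) → N),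
    Function.Injective obj ∧ Function.Injective ag ∧
    (∀ ℓ : Fin (k + 1), obj ℓ ∈ μ (ag ℓ)) ∧
    (∀ ℓ : Fin (k + 1),
      (pref (ag ℓ)).strict ((insert (obj (ℓ + 1)) (μ (ag ℓ))).erase (obj ℓ)) (μ (ag ℓ)))

/-- Individual-good efficiency of an assignment at a profile. -/
def IGEat [DecidableEq O] (pref : N → Pref O) (μ : N → Finset O) : Prop :=
  ¬ ParetoImprovingCycleAt pref μ

/-- `ν` Pareto dominates `μ` at the profile `pref`. -/
def ParetoDominates (pref : N → Pref O) (ν μ : N → Finset O) : Prop :=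
  (∀ i, (pref i).weak (ν i) (μ i)) ∧ ∃ j, (pref j).strict (ν j) (μ j)

/-- Pareto efficiency of an assignment at a profile. -/
def ParetoEffAt (pref : N → Pref O) (μ : N → Finset O) : Prop :=
  ∀ ν : Allocation N O, ¬ ParetoDominates pref ν.bundle μ

/-- The marginally most-preferred object of a (nonempty) finite set of objects. -/
noncomputable def Pref.best [Nonempty O] (p : Pref O) (S : Finset O) : O :=
  if h : ∃ x : O, x ∈ S ∧ ∀ y ∈ S, p.weak {x} {y} then h.choose
  else Classical.arbitrary O

/-- The conditionally most-preferred object of `S` given the already-held bundle `Y`. -/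
noncomputable def Pref.cbest [Nonempty O] [DecidableEq O] (p : Pref O) (S Y : Finset O) : O :=
  if h : ∃ x : O, x ∈ S ∧ ∀ Z : Finset O, Z ⊆ S.erase x → p.strict (insert x Y) (Y ∪ Z)
  then h.choose else Classical.arbitrary O

/-- The initial owner of an object. -/
noncomputable def Allocation.owner (ω : Allocation N O) (o : O) : N :=
  (ω.cover o).choose

/-- One pass of the generalized TTC algorithm, with fuel.  At each step every agent points
to her marginally best remaining object and every remaining object points to its owner;
the objects lying on cycles of this functional graph (the periodic points of `g`) are
traded: the owner of a cycling object receives the object she points to. -/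
noncomputable def TTCaux [Nonempty O] [DecidableEq O] (pref : N → Pref O) (own : O → N) :
    ℕ → Finset O → N → Finset O
  | 0, _, _ => ∅
  | fuel + 1, S, i =>
      let g : O → O := fun o => (pref (own o)).best S
      let C : Finset O := S.filter fun o => ∃ k : ℕ, 0 < k ∧ g^[k] o = o
      if S.Nonempty then
        ((C.filter fun o => own o = i).image g) ∪ TTCaux pref own fuel (S \ C) i
      else ∅

/-- The generalized Top Trading Cycles rule: the bundle received by agent `i`. -/
noncomputable def TTC [Fintype O] [Nonempty O] [DecidableEq O]
    (pref : N → Pref O) (ω : Allocation N O) (i : N) : Finset O :=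
  TTCaux pref ω.owner (Fintype.card O + 1) Finset.univ i

/-- One pass of the Augmented TTC algorithm, with fuel: agents point to their
conditionally most-preferred remaining object given the bundle assigned so far. -/
noncomputable def ATTCaux [Nonempty O] [DecidableEq O] (pref : N → Pref O) (own : O → N) :
    ℕ → Finset O → (N → Finset O) → N → Finset O
  | 0, _, μ => μ
  | fuel + 1, S, μ =>
      let g : O → O := fun o => (pref (own o)).cbest S (μ (own o))
      let C : Finset O := S.filter fun o => ∃ k : ℕ, 0 < k ∧ g^[k] o = o
      if S.Nonempty then
        ATTCaux pref own fuel (S \ C) (fun j => μ j ∪ ((C.filter fun o => own o = j).image g))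
      else μ

/-- The Augmented Top Trading Cycles rule: the bundle received by agent `i`. -/
noncomputable def ATTC [Fintype O] [Nonempty O] [DecidableEq O]
    (pref : N → Pref O) (ω : Allocation N O) (i : N) : Finset O :=
  ATTCaux pref ω.owner (Fintype.card O + 1) Finset.univ (fun _ => ∅) i

/-- Conditional marginal preference of `p` given the bundle `Y`:
`x` is conditionally better than `y`. -/
def CMarg [DecidableEq O] (p : Pref O) (Y : Finset O) (x y : O) : Prop :=
  p.strict ((insert x Y).erase y) ((insert y Y).erase x)

/-- Weak conditional marginal preference. -/
def CMargWeak [DecidableEq O] (p : Pref O) (Y : Finset O) (x y : O) : Prop :=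
  CMarg p Y x y ∨ x = y

/-- Drop strategy on the conditionally lexicographic domain: `x ∉ ωi` becomes the worst,
with preferences over bundles avoiding `x` unchanged. -/
def DropStrategyCL (ωi : Finset O) (p p' : Pref O) : Prop :=
  ∃ x : O, x ∉ ωi ∧
    (∀ Y : Finset O, Y.Nonempty → x ∉ Y → p'.strict Y {x}) ∧
    (∀ Y Z : Finset O, x ∉ Y → x ∉ Z → (p'.strict Y Z ↔ p.strict Y Z))

section Rules

variable [DecidableEq O]

/-- Balancedness of a rule on the domain `D`. -/
def RBAL (D : Pref O → Prop) (ω : Allocation N O)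
    (φ : (N → Pref O) → Allocation N O) : Prop :=
  ∀ P : N → Pref O, (∀ i, D (P i)) → ∀ i, ((φ P).bundle i).card = (ω.bundle i).card

/-- Individual-good efficiency of a rule on the domain `D`. -/
def RIGE (D : Pref O → Prop) (φ : (N → Pref O) → Allocation N O) : Prop :=
  ∀ P : N → Pref O, (∀ i, D (P i)) → IGEat P ((φ P).bundle)

/-- Pareto efficiency of a rule on the domain `D`. -/
def RPE (D : Pref O → Prop) (φ : (N → Pref O) → Allocation N O) : Prop :=
  ∀ P : N → Pref O, (∀ i, D (P i)) → ParetoEffAt P ((φ P).bundle)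

/-- Individual rationality of a rule on the domain `D`. -/
def RIR (D : Pref O → Prop) (ω : Allocation N O)
    (φ : (N → Pref O) → Allocation N O) : Prop :=
  ∀ P : N → Pref O, (∀ i, D (P i)) → ∀ i, (P i).weak ((φ P).bundle i) (ω.bundle i)

/-- The worst-endowment lower bound of a rule on the domain `D`: no agent receives an
object marginally worse than the marginally worst object of her endowment. -/
def RWELB (D : Pref O → Prop) (ω : Allocation N O)
    (φ : (N → Pref O) → Allocation N O) : Prop :=
  ∀ P : N → Pref O, (∀ i, D (P i)) → ∀ i, ∀ o ∈ (φ P).bundle i,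
    ∀ w ∈ ω.bundle i, (∀ y ∈ ω.bundle i, (P i).weak {y} {w}) → (P i).weak {o} {w}

/-- Marginality of a rule on the domain `D`. -/
def RMAR (D : Pref O → Prop) (φ : (N → Pref O) → Allocation N O) : Prop :=
  ∀ P P' : N → Pref O, (∀ i, D (P i)) → (∀ i, D (P' i)) →
    (∀ i, MargEq (P i) (P' i)) → ∀ i, (φ P).bundle i = (φ P').bundle i

variable [DecidableEq N]

/-- Truncation-proofness of a rule on the domain `D`. -/
def RTP (D : Pref O → Prop) (ω : Allocation N O)
    (φ : (N → Pref O) → Allocation N O) : Prop :=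
  ∀ P : N → Pref O, (∀ i, D (P i)) → ∀ i : N, ∀ p' : Pref O, D p' →
    TruncationStrategy (ω.bundle i) (P i) p' →
    (P i).weak ((φ P).bundle i) ((φ (Function.update P i p')).bundle i)

/-- Drop strategy-proofness of a rule on the domain `D`. -/
def RDSP (D : Pref O → Prop) (ω : Allocation N O)
    (φ : (N → Pref O) → Allocation N O) : Prop :=
  ∀ P : N → Pref O, (∀ i, D (P i)) → ∀ i : N, ∀ p' : Pref O, D p' →
    DropStrategy (ω.bundle i) (P i) p' →
    (P i).weak ((φ P).bundle i) ((φ (Function.update P i p')).bundle i)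

/-- Subset-drop strategy-proofness of a rule on the domain `D`. -/
def RSDSP (D : Pref O → Prop) (ω : Allocation N O)
    (φ : (N → Pref O) → Allocation N O) : Prop :=
  ∀ P : N → Pref O, (∀ i, D (P i)) → ∀ i : N, ∀ p' : Pref O, D p' →
    SubsetDropStrategy (ω.bundle i) (P i) p' →
    (P i).weak ((φ P).bundle i) ((φ (Function.update P i p')).bundle i)

/-- Worst-endowment lower bound on the conditionally lexicographic domain, formulated
with conditional marginal preferences. -/
def RWELBCL (D : Pref O → Prop) (ω : Allocation N O)
    (φ : (N → Pref O) → Allocation N O) : Prop :=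
  ∀ P : N → Pref O, (∀ i, D (P i)) → ∀ i, ∀ o ∈ (φ P).bundle i,
    ∀ w ∈ ω.bundle i,
      (∀ y ∈ ω.bundle i, CMargWeak (P i) ((φ P).bundle i) y w) →
      CMargWeak (P i) ((φ P).bundle i) o w

/-- Drop strategy-proofness on the conditionally lexicographic domain. -/
def RDSPCL (D : Pref O → Prop) (ω : Allocation N O)
    (φ : (N → Pref O) → Allocation N O) : Prop :=
  ∀ P : N → Pref O, (∀ i, D (P i)) → ∀ i : N, ∀ p' : Pref O, D p' →
    DropStrategyCL (ω.bundle i) (P i) p' →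
    (P i).weak ((φ P).bundle i) ((φ (Function.update P i p')).bundle i)

end Rules

/-- Agent `i`'s opportunity set under TTC when reporting `p`: the set of bundles
she may receive as others' (responsive) reports vary. -/
def Opp [Fintype O] [Nonempty O] [DecidableEq O] (ω : Allocation N O) (i : N)
    (p : Pref O) : Set (Finset O) :=
  {A | ∃ Q : N → Pref O, (∀ j, Responsive (Q j)) ∧ Q i = p ∧ TTC Q ω i = A}


theorem exists_worst {O : Type} (p : Pref O) (S : Finset O) (h : S.Nonempty) :
    ∃ w ∈ S, ∀ y ∈ S, p.weak {y} {w} := by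
  classical
  induction h using Finset.Nonempty.cons_induction with
  | singleton a => exact ⟨a, by simp, by intro y hy; right; simp at hy; rw [hy]⟩
  | cons a s ha hs ih =>
    obtain ⟨w, hw, hmin⟩ := ih
    rcases p.total {a} {w} with h1 | h1 | h1
    · refine ⟨w, by simp [hw], ?_⟩
      intro y hy
      rcases Finset.mem_cons.1 hy with rfl | hy
      · exact Or.inl h1
      · exact hmin y hy
    · refine ⟨w, by simp [hw], ?_⟩
      intro y hy
      rcases Finset.mem_cons.1 hy with rfl | hy
      · exact Or.inr h1
      · exact hmin y hy
    · refine ⟨a, by simp, ?_⟩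
      intro y hy
      rcases Finset.mem_cons.1 hy with rfl | hy
      · exact Or.inr rfl
      · rcases hmin y hy with h2 | h2
        · exact Or.inl (p.trans _ _ _ h2 h1)
        · rw [h2]; exact Or.inl h1

theorem pref_asymm {O : Type} (p : Pref O) {X Y : Finset O} (h : p.strict X Y) :
    ¬ p.strict Y X := fun h' => p.irrefl _ (p.trans _ _ _ h h')

theorem lex_agree {O : Type} [DecidableEq O] (p q : Pref O) (hp : Lexicographic p)
    (hq : Lexicographic q) (S : Finset O)
    (h : ∀ x ∉ S, ∀ y ∉ S, (p.strict {x} {y} ↔ q.strict {x} {y}))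
    (A B : Finset O) (hA : ∀ x ∈ S, x ∉ A) (hB : ∀ x ∈ S, x ∉ B) :
    p.strict A B ↔ q.strict A B := by
  by_cases hAB : A = B
  · subst hAB
    exact ⟨fun h => (p.irrefl _ h).elim, fun h => (q.irrefl _ h).elim⟩
  rw [hp A B hAB, hq A B hAB]
  have key : ∀ y ∈ (A \ B) ∪ (B \ A), y ∉ S := by
    intro y hy hyS
    have := hA y hyS
    have := hB y hyS
    simp_all
  constructor
  · rintro ⟨x, hx, hy⟩
    exact ⟨x, hx, fun y hy' hne =>
      (h x (key x (Finset.mem_union_left _ hx)) y (key y hy')).1 (hy y hy' hne)⟩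
  · rintro ⟨x, hx, hy⟩
    exact ⟨x, hx, fun y hy' hne =>
      (h x (key x (Finset.mem_union_left _ hx)) y (key y hy')).2 (hy y hy' hne)⟩

theorem pref_ext {O : Type} {p q : Pref O} (h : ∀ A B, p.strict A B ↔ q.strict A B) : p = q := by
  cases p; cases q
  congr
  funext A B
  exact propext (h A B)

/-- Lexicographic preference induced by an injective rank function. -/
def lexPref {O : Type} [DecidableEq O] (f : O → ℕ) (hf : Function.Injective f) : Pref O where
  strict X Y := toColex (Y.image f) < toColex (X.image f)
  total X Y := by
    rcases lt_trichotomy (toColex (Y.image f)) (toColex (X.image f)) with h | h | h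
    · exact Or.inl h
    · right; left
      have h2 : Y.image f = X.image f := by simpa using h
      exact (Finset.image_injective hf h2).symm
    · exact Or.inr (Or.inr h)
  irrefl X := lt_irrefl _
  trans X Y Z h1 h2 := lt_trans h2 h1

theorem lexPref_single {O : Type} [DecidableEq O] (f : O → ℕ) (hf : Function.Injective f)
    (x y : O) : (lexPref f hf).strict {x} {y} ↔ f y < f x := by
  show toColex (Finset.image f {y}) < toColex (Finset.image f {x}) ↔ _
  rw [Finset.Colex.toColex_lt_toColex_iff_exists_forall_lt]
  simp only [Finset.image_singleton, Finset.mem_singleton]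
  constructor
  · rintro ⟨a, rfl, h1, h2⟩
    exact h2 _ rfl (Ne.symm h1)
  · intro h
    refine ⟨_, rfl, h.ne', ?_⟩
    rintro b rfl _
    exact h

theorem lexPref_lex {O : Type} [DecidableEq O] (f : O → ℕ) (hf : Function.Injective f) :
    Lexicographic (lexPref f hf) := by
  intro X Y hXY
  simp only [lexPref_single]
  have e : (lexPref f hf).strict X Y ↔ ∃ a ∈ X, a ∉ Y ∧ ∀ b ∈ Y, b ∉ X → f b < f a := by
    show toColex (Y.image f) < toColex (X.image f) ↔ _
    rw [Finset.Colex.toColex_lt_toColex_iff_exists_forall_lt]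
    simp [hf.eq_iff]
  rw [e]
  constructor
  · rintro ⟨a, ha, haY, hb⟩
    obtain ⟨x, hx, hmax⟩ := Finset.exists_max_image (X \ Y) f ⟨a, by simp [ha, haY]⟩
    refine ⟨x, hx, ?_⟩
    intro y hy hne
    rcases Finset.mem_union.1 hy with hy | hy
    · exact lt_of_le_of_ne (hmax y hy) (fun h => hne (hf h))
    · rw [Finset.mem_sdiff] at hy
      exact lt_of_lt_of_le (hb y hy.1 hy.2) (hmax a (by simp [ha, haY]))
  · rintro ⟨x, hx, hy⟩
    rw [Finset.mem_sdiff] at hx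
    refine ⟨x, hx.1, hx.2, fun b hb hbX => hy b (by simp [hb, hbX]) ?_⟩
    rintro rfl
    exact hbX hx.1

theorem exists_drop {O : Type} [Fintype O] [DecidableEq O] (p : Pref O) (X : Finset O) :
    ∃ q : Pref O, Lexicographic q ∧
    (∀ x ∈ X, ∀ y ∈ X, (p.strict {x} {y} ↔ q.strict {x} {y})) ∧
    (∀ x ∉ X, ∀ y ∉ X, (p.strict {x} {y} ↔ q.strict {x} {y})) ∧
    (∀ x ∈ X, ∀ y ∉ X, q.strict {y} {x}) := by
  classical
  let r : O → ℕ := fun o => (Finset.univ.filter fun y => p.strict {o} {y}).card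
  have hr1 : ∀ x y, p.strict {x} {y} → r y < r x := by
    intro x y h
    apply Finset.card_lt_card
    rw [Finset.ssubset_iff_of_subset]
    · exact ⟨y, by simp [h], by simp [p.irrefl]⟩
    · intro z hz
      simp at hz ⊢
      exact p.trans _ _ _ h hz
  have hr : ∀ x y, p.strict {x} {y} ↔ r y < r x := by
    intro x y
    refine ⟨hr1 x y, fun h => ?_⟩
    rcases p.total {x} {y} with h1 | h1 | h1
    · exact h1
    · simp at h1; subst h1; omega
    · have := hr1 _ _ h1; omega
  have hinj : Function.Injective r := by
    intro x y h
    rcases p.total {x} {y} with h1 | h1 | h1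
    · have := hr1 _ _ h1; omega
    · simpa using h1
    · have := hr1 _ _ h1; omega
  have hb : ∀ x, r x ≤ Fintype.card O := fun x => Finset.card_le_univ _
  let f : O → ℕ := fun o => if o ∈ X then r o else r o + (Fintype.card O + 1)
  have hf : Function.Injective f := by
    intro x y h
    have h1 := hb x
    have h2 := hb y
    apply hinj
    simp only [f] at h
    split_ifs at h <;> omega
  refine ⟨lexPref f hf, lexPref_lex f hf, ?_, ?_, ?_⟩
  · intro x hx y hy
    rw [lexPref_single, hr]; simp [f, hx, hy]
  · intro x hx y hy
    rw [lexPref_single, hr]; simp [f, hx, hy]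
  · intro x hx y hy
    rw [lexPref_single]
    have h1 := hb x
    simp only [f, hx, hy, if_true, if_false]; omega

theorem avoid {N O : Type} [DecidableEq O]
    (ω : Allocation N O) (φ : (N → Pref O) → Allocation N O)
    (hWELB : RWELB Lexicographic ω φ) (Q : N → Pref O) (hQ : ∀ i, Lexicographic (Q i))
    (i : N) (x : O) (hx : ∀ y ∈ ω.bundle i, (Q i).strict {y} {x}) :
    x ∉ (φ Q).bundle i := by
  intro hmem
  obtain ⟨w, hw, hmin⟩ := exists_worst (Q i) (ω.bundle i) (ω.nonempty i)
  have h1 := hx w hw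
  rcases hWELB Q hQ i x hmem w hw hmin with h | h
  · exact pref_asymm _ h h1
  · rw [h] at h1; exact (Q i).irrefl _ h1

theorem sdsp_aux {N O : Type} [Fintype O] [DecidableEq N] [DecidableEq O]
    (ω : Allocation N O) (φ : (N → Pref O) → Allocation N O)
    (hDSP : RDSP Lexicographic ω φ) (hWELB : RWELB Lexicographic ω φ)
    (P : N → Pref O) (hP : ∀ i, Lexicographic (P i)) (i : N) :
    ∀ (n : ℕ) (X : Finset O), X.card = n → (∀ x ∈ X, x ∉ ω.bundle i) →
    ∀ p' : Pref O, Lexicographic p' →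
    (∀ x ∈ X, ∀ y ∈ X, ((P i).strict {x} {y} ↔ p'.strict {x} {y})) →
    (∀ x ∉ X, ∀ y ∉ X, ((P i).strict {x} {y} ↔ p'.strict {x} {y})) →
    (∀ x ∈ X, ∀ y ∉ X, p'.strict {y} {x}) →
    (P i).weak ((φ P).bundle i) ((φ (Function.update P i p')).bundle i) := by
  have hupd : ∀ q, Lexicographic q → ∀ j, Lexicographic (Function.update P i q j) := by
    intro q hq j
    by_cases hj : j = i
    · subst hj; simpa using hq
    · simpa [hj] using hP j
  intro n
  induction n with
  | zero =>
    intro X hX _ p' hp' _ h2 _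
    rw [Finset.card_eq_zero] at hX
    have : P i = p' := pref_ext fun A B =>
      lex_agree (P i) p' (hP i) hp' X h2 A B (by simp [hX]) (by simp [hX])
    rw [← this, Function.update_eq_self]
    exact Or.inr rfl
  | succ n ih =>
    intro X hX hXω p' hp' h1 h2 h3
    obtain ⟨x, hx, hmin⟩ := exists_worst (P i) X (Finset.card_pos.1 (by omega))
    obtain ⟨q, hq, q1, q2, q3⟩ := exists_drop (P i) (X.erase x)
    have hX0 : (X.erase x).card = n := by rw [Finset.card_erase_of_mem hx]; omega
    have hI := ih (X.erase x) hX0 (fun z hz => hXω z (Finset.mem_of_mem_erase hz)) q hq q1 q2 q3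
    have hdrop : DropStrategy (ω.bundle i) (Function.update P i q i) p' := by
      rw [Function.update_self]
      refine ⟨x, hXω x hx, ?_, ?_⟩
      · intro u v hu hv
        by_cases hu' : u ∈ X <;> by_cases hv' : v ∈ X
        · rw [← h1 u hu' v hv', q1 u (by simp [*]) v (by simp [*])]
        · have a := h3 u hu' v hv'
          have b := q3 u (by simp [*]) v (by simp [*])
          exact ⟨fun h => (pref_asymm _ h b).elim, fun h => (pref_asymm _ h a).elim⟩
        · exact ⟨fun _ => h3 v hv' u hu', fun _ => q3 v (by simp [*]) u (by simp [*])⟩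
        · rw [← h2 u hu' v hv', q2 u (by simp [*]) v (by simp [*])]
      · intro y hy
        by_cases hyX : y ∈ X
        · rw [← h1 y hyX x hx]
          rcases hmin y hyX with h | h
          · exact h
          · exact (hy (by simpa using h)).elim
        · exact h3 x hx y hyX
    have hD := hDSP (Function.update P i q) (hupd q hq) i p' hp' hdrop
    rw [Function.update_idem, Function.update_self] at hD
    have hA : ∀ z ∈ X.erase x, z ∉ (φ (Function.update P i q)).bundle i := by
      intro z hz
      apply avoid ω φ hWELB _ (hupd q hq)
      intro y hy
      rw [Function.update_self]
      exact q3 z hz y fun h => hXω y (Finset.mem_of_mem_erase h) hy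
    have hB : ∀ z ∈ X.erase x, z ∉ (φ (Function.update P i p')).bundle i := by
      intro z hz
      apply avoid ω φ hWELB _ (hupd p' hp')
      intro y hy
      rw [Function.update_self]
      exact h3 z (Finset.mem_of_mem_erase hz) y fun h => hXω y h hy
    rcases hD with hD | hD
    · rw [← lex_agree (P i) q (hP i) hq (X.erase x) q2 _ _ hA hB] at hD
      rcases hI with hI | hI
      · exact Or.inl ((P i).trans _ _ _ hI hD)
      · rw [hI]; exact Or.inl hD
    · rw [← hD]; exact hI

/-- On the lexicographic domain, every rule satisfying DSP and WELB
also satisfies SDSP. -/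
theorem stmt2 {N O : Type} [Fintype N] [Fintype O] [DecidableEq N] [DecidableEq O]
    (hN : 2 ≤ Fintype.card N) (hNO : Fintype.card N ≤ Fintype.card O)
    (ω : Allocation N O) (φ : (N → Pref O) → Allocation N O)
    (hDSP : RDSP Lexicographic ω φ) (hWELB : RWELB Lexicographic ω φ) :
    RSDSP Lexicographic ω φ := by
  classical
  intro P hP i p' hp' ⟨X, h0, h1, h2, h3⟩
  have := sdsp_aux ω φ hDSP hWELB P hP i _ X.toFinset rfl
  simp only [Set.mem_toFinset] at this
  exact this h0 p' hp' h1 h2 h3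

end Realloc
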